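/- arXiv:math/0702432 — 2 statements merged into one kernel-verified Lean document; each statement's English description precedes it below -/
import Mathlib

section
/- If 0 ≤ δ and 4δ³ + 2δ² + 3δ < 1, then for every configuration C there exists an endpoint c of C such that δ ≤ λ(C|I_ω(c)) ≤ 1−δ for all ω > 0. -/
open MeasureTheory Set Filter

/-- The relative measure of `H` in the interval `(p - ω, p + ω)`,
i.e. `λ(H | I_ω(p)) = λ(H ∩ I_ω(p)) / (2ω)`. -/
noncomputable def relMeasure (H : Set ℝ) (p ω : ℝ) : ℝ :=
  (volume (H ∩ Ioo (p - ω) (p + ω))).toReal / (2 * ω)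

/-- A configuration: a finite increasing sequence `0 < a 0 < b 0 < a 1 < ⋯ < a (r-1) < b (r-1)`
of positive reals. -/
structure Config where
  r : ℕ
  hr : 0 < r
  a : Fin r → ℝ
  b : Fin r → ℝ
  ha : ∀ i, 0 < a i
  hab : ∀ i, a i < b i
  hba : ∀ i j : Fin r, i < j → b i < a j

/-- The set `C = (-∞,0) ∪ ⋃ i (a i, b i)` associated to a configuration. -/
def Config.carrier (C : Config) : Set ℝ := Iio 0 ∪ ⋃ i, Ioo (C.a i) (C.b i)

/-- The endpoints of a configuration: `0` together with all the `a i` and `b i`. -/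
def Config.endpoints (C : Config) : Set ℝ := insert 0 (range C.a ∪ range C.b)

structure GBase (E : Finset ℝ) (F G : ℝ → ℝ) (p q : ℝ) : Prop where
  mF : Monotone F
  mG : Monotone G
  sum : ∀ x, F x + G x = x
  lo : ∀ e ∈ E, p ≤ e
  hi : ∀ e ∈ E, e ≤ q
  hp : p ∈ E
  hq : q ∈ E
  pure : ∀ x y, p ≤ x → x ≤ y → y ≤ q → (∀ e ∈ E, ¬ (x < e ∧ e < y)) → F y = F x ∨ G y = G x

def GWhite (t : ℝ) (F : ℝ → ℝ) (p q c ρ : ℝ) : Prop :=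
  0 < ρ ∧ p ≤ c - ρ ∧ F (min (c + ρ) q) - F (c - ρ) < t * ρ

def GBlack (t : ℝ) (G : ℝ → ℝ) (p q c ω : ℝ) : Prop :=
  0 < ω ∧ c + ω ≤ q ∧ G (c + ω) - G (max (c - ω) p) < t * ω

def GBad (t : ℝ) (E : Finset ℝ) (F G : ℝ → ℝ) (p q : ℝ) : Prop :=
  ∀ c ∈ E, (∃ ρ, GWhite t F p q c ρ) ∨ (∃ ω, GBlack t G p q c ω)

theorem GBase.swap {E : Finset ℝ} {F G : ℝ → ℝ} {p q : ℝ} (h : GBase E F G p q) :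
    GBase E G F p q where
  mF := h.mG
  mG := h.mF
  sum x := by rw [add_comm]; exact h.sum x
  lo := h.lo
  hi := h.hi
  hp := h.hp
  hq := h.hq
  pure x y h1 h2 h3 h4 := (h.pure x y h1 h2 h3 h4).symm

theorem GBase.reflect {E : Finset ℝ} {F G : ℝ → ℝ} {p q : ℝ} (h : GBase E F G p q) :
    GBase (E.image (fun x => -x)) (fun x => -G (-x)) (fun x => -F (-x)) (-q) (-p) where
  mF x y hxy := neg_le_neg (h.mG (neg_le_neg hxy))
  mG x y hxy := neg_le_neg (h.mF (neg_le_neg hxy))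
  sum x := by have := h.sum (-x); linarith
  lo e he := by
    obtain ⟨c, hc, rfl⟩ := Finset.mem_image.1 he
    exact neg_le_neg (h.hi c hc)
  hi e he := by
    obtain ⟨c, hc, rfl⟩ := Finset.mem_image.1 he
    exact neg_le_neg (h.lo c hc)
  hp := Finset.mem_image_of_mem _ h.hq
  hq := Finset.mem_image_of_mem _ h.hp
  pure x y h1 h2 h3 h4 := by
    have := h.pure (-y) (-x) (by linarith) (by linarith) (by linarith) (by
      intro e he ⟨h5, h6⟩
      exact h4 (-e) (Finset.mem_image_of_mem _ he) ⟨by linarith, by linarith⟩)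
    rcases this with h7 | h7
    · right; linarith
    · left; linarith

theorem GBad.reflect {t : ℝ} {E : Finset ℝ} {F G : ℝ → ℝ} {p q : ℝ} (h : GBad t E F G p q) :
    GBad t (E.image (fun x => -x)) (fun x => -G (-x)) (fun x => -F (-x)) (-q) (-p) := by
  intro e he
  obtain ⟨c, hc, rfl⟩ := Finset.mem_image.1 he
  rcases h c hc with ⟨ρ, h1, h2, h3⟩ | ⟨ρ, h1, h2, h3⟩
  · right
    refine ⟨ρ, h1, by linarith, ?_⟩
    have e1 : -(-c + ρ) = c - ρ := by ring
    have e2 : -(max (-c - ρ) (-q)) = min (c + ρ) q := by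
      rw [show -c - ρ = -(c + ρ) by ring, max_neg_neg, neg_neg]
    dsimp only
    rw [e1, e2]; linarith
  · left
    refine ⟨ρ, h1, by linarith, ?_⟩
    have e1 : -(-c - ρ) = c + ρ := by ring
    have e2 : -(min (-c + ρ) (-p)) = max (c - ρ) p := by
      rw [show -c + ρ = -(c - ρ) by ring, min_neg_neg, neg_neg]
    dsimp only
    rw [e1, e2]; linarith

theorem GBase.lipF {E : Finset ℝ} {F G : ℝ → ℝ} {p q : ℝ} (h : GBase E F G p q) {x y : ℝ}
    (hxy : x ≤ y) : F y - F x ≤ y - x := by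
  have := h.mG hxy
  have := h.sum x
  have := h.sum y
  linarith

/-- Sub-system. -/
theorem GBase.sub {E : Finset ℝ} {F G : ℝ → ℝ} {p q : ℝ} (h : GBase E F G p q) {u v : ℝ}
    (hu : u ∈ E) (hv : v ∈ E) (huv : u ≤ v) :
    GBase (E.filter (fun e => u ≤ e ∧ e ≤ v)) F G u v where
  mF := h.mF
  mG := h.mG
  sum := h.sum
  lo e he := (Finset.mem_filter.1 he).2.1
  hi e he := (Finset.mem_filter.1 he).2.2
  hp := Finset.mem_filter.2 ⟨hu, le_rfl, huv⟩
  hq := Finset.mem_filter.2 ⟨hv, huv, le_rfl⟩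
  pure x y h1 h2 h3 h4 := by
    apply h.pure x y ((h.lo u hu).trans h1) h2 (h3.trans (h.hi v hv))
    intro e he h5
    exact h4 e (Finset.mem_filter.2 ⟨he, by linarith, by linarith⟩) h5

/-- An interior interval between a pure `C` gap and a pure complement gap. -/
theorem sandwich {t : ℝ} (ht1 : t ≤ 1) {E : Finset ℝ} {F G : ℝ → ℝ} {p q : ℝ}
    (h : GBase E F G p q) {r r' s s' : ℝ} (hpr : p ≤ r) (hr : r < r') (hrs : r' ≤ s)
    (hs : s < s') (hsq : s' ≤ q)
    (hrE : ∀ e ∈ E, ¬ (r < e ∧ e < r')) (hsE : ∀ e ∈ E, ¬ (s < e ∧ e < s'))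
    (hG : G r' = G r) (hF : F s' = F s)
    (hbad : ∀ c ∈ E, r' ≤ c → c ≤ s → (∃ ρ, GWhite t F p q c ρ ∧ r' ≤ c - ρ) ∨
      (∃ ω, GBlack t G p q c ω ∧ c + ω ≤ s)) :
    ∃ E' u v, E'.card < E.card ∧ GBase E' F G u v ∧ GBad t E' F G u v := by
  have hne : ∃ e ∈ E, r' ≤ e ∧ e ≤ s := by
    by_contra hno
    push Not at hno
    rcases h.pure r s' hpr (by linarith) hsq (by
      intro e he ⟨h1, h2⟩
      by_cases h3 : r' ≤ e
      · exact hsE e he ⟨hno e he h3, h2⟩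
      · exact hrE e he ⟨h1, not_le.1 h3⟩) with h1 | h1
    · have := h.mF hr.le
      have := h.mF (hrs.trans hs.le)
      have := h.sum r
      have := h.sum r'
      linarith
    · have := h.mG hs.le
      have := h.mG (hr.le.trans hrs)
      have := h.sum s
      have := h.sum s'
      linarith
  set M := E.filter (fun e => r' ≤ e ∧ e ≤ s) with hM
  have hMne : M.Nonempty := by
    obtain ⟨e, he, h1⟩ := hne
    exact ⟨e, Finset.mem_filter.2 ⟨he, h1⟩⟩
  obtain ⟨u, huM, humin⟩ := M.exists_min_image id hMne
  obtain ⟨v, hvM, hvmax⟩ := M.exists_max_image id hMne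
  simp only [id] at humin hvmax
  obtain ⟨hu, hu1, hu2⟩ := Finset.mem_filter.1 huM
  obtain ⟨hv, hv1, hv2⟩ := Finset.mem_filter.1 hvM
  have huv : u ≤ v := humin v hvM
  have hGu : G u = G r := by
    rcases h.pure r u hpr (by linarith) (h.hi u hu) (by
      intro e he ⟨h1, h2⟩
      by_cases h3 : r' ≤ e
      · have := humin e (Finset.mem_filter.2 ⟨he, h3, by linarith⟩)
        linarith
      · exact hrE e he ⟨h1, not_le.1 h3⟩) with h1 | h1
    · have := h.mF hr.le
      have := h.mF hu1
      have := h.sum r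
      have := h.sum r'
      linarith
    · exact h1
  have hFv : F s' = F v := by
    rcases h.pure v s' (h.lo v hv) (by linarith) hsq (by
      intro e he ⟨h1, h2⟩
      by_cases h3 : e ≤ s
      · have := hvmax e (Finset.mem_filter.2 ⟨he, by linarith, h3⟩)
        linarith
      · exact hsE e he ⟨not_le.1 h3, h2⟩) with h1 | h1
    · exact h1
    · have := h.mG hs.le
      have := h.mG hv2
      have := h.sum s
      have := h.sum s'
      linarith
  refine ⟨E.filter (fun e => u ≤ e ∧ e ≤ v), u, v, ?_, h.sub hu hv huv, ?_⟩
  · apply Finset.card_lt_card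
    refine ⟨Finset.filter_subset _ _, fun hsub => ?_⟩
    have := (Finset.mem_filter.1 (hsub h.hp)).2.1
    linarith
  · intro c hc
    obtain ⟨hcE, hc1, hc2⟩ := Finset.mem_filter.1 hc
    rcases hbad c hcE (hu1.trans hc1) (hc2.trans hv2) with ⟨ρ, ⟨h1, h2, h3⟩, h4⟩ | ⟨ρ, ⟨h1, h2, h3⟩, h4⟩
    · left
      have hq := h.hi v hv
      by_cases h5 : u ≤ c - ρ
      · refine ⟨ρ, h1, h5, ?_⟩
        have := h.mF (min_le_min (le_refl (c + ρ)) hq)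
        linarith
      · push Not at h5
        have a1 := h.sum (c - ρ)
        have a2 := h.sum u
        have a3 := h.mG h5.le
        have a4 := h.mG (show r ≤ c - ρ by linarith)
        have a5 : F u - F (c - ρ) = u - (c - ρ) := by linarith
        have a6 : F (min (c + (c - u)) v) ≤ F (min (c + ρ) q) :=
          h.mF (min_le_min (by linarith) hq)
        have a8 : t * (u - (c - ρ)) ≤ u - (c - ρ) := by nlinarith
        have a7 : F (min (c + (c - u)) v) - F u < t * (c - u) := by linarith
        have a9 : c - u ≠ 0 := by
          intro h0
          have a10 : min (c + (c - u)) v = u := by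
            rw [h0, add_zero, min_eq_left hc2]; linarith
          rw [a10, h0] at a7; linarith
        refine ⟨c - u, lt_of_le_of_ne (by linarith) a9.symm, by linarith, ?_⟩
        rw [sub_sub_cancel]; exact a7
    · right
      have hq := h.lo u hu
      by_cases h5 : c + ρ ≤ v
      · refine ⟨ρ, h1, h5, ?_⟩
        have := h.mG (max_le_max (le_refl (c - ρ)) hq)
        linarith
      · push Not at h5
        have a1 := h.sum (c + ρ)
        have a2 := h.sum v
        have a3 := h.mF h5.le
        have a4 := h.mF (show c + ρ ≤ s' by linarith)
        have a5 : G (c + ρ) - G v = c + ρ - v := by linarith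
        have a6 : G (max (c - ρ) p) ≤ G (max (c - (v - c)) u) :=
          h.mG (max_le_max (by linarith) hq)
        have a8 : t * (c + ρ - v) ≤ c + ρ - v := by nlinarith
        have a7 : G v - G (max (c - (v - c)) u) < t * (v - c) := by linarith
        have a9 : v - c ≠ 0 := by
          intro h0
          have a10 : max (c - (v - c)) u = v := by
            rw [h0, sub_zero, max_eq_left hc1]; linarith
          rw [a10, h0] at a7; linarith
        refine ⟨v - c, lt_of_le_of_ne (by linarith) a9.symm, by linarith, ?_⟩
        rw [add_sub_cancel]; exact a7

theorem cover_bound {t : ℝ} (ht0 : 0 ≤ t) (ht2 : t ≤ 2) {F : ℝ → ℝ} (mF : Monotone F)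
    (lip : ∀ x y, x ≤ y → F y - F x ≤ y - x) (E : Finset ℝ) {p q z x : ℝ} (hpz : p ≤ z)
    (hzx : z ≤ x) (hxq : x ≤ q) (J : Finset (ℝ × ℝ))
    (hJ : ∀ j ∈ J, p ≤ j.1 ∧ j.1 ≤ j.2 ∧ j.2 ≤ q ∧ 2 * (F j.2 - F j.1) ≤ t * (j.2 - j.1))
    (hcov : ∀ r r', r < r' → z ≤ r → r' ≤ x → (∀ e ∈ E, ¬ (r < e ∧ e < r')) →
      (∀ j ∈ J, j.2 ≤ r ∨ r' ≤ j.1) → F r' = F r) :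
    ∃ r, x ≤ r ∧ r ≤ q ∧ (2 + t) * (F r - F z) ≤ 2 * t * (r - z) + t * (z - p) := by
  classical
  let St : ℝ → ℝ → Prop := fun a r => z ≤ a ∧ a ≤ r ∧ r ≤ q ∧
    (2 + t) * (F a - F z) + 2 * (F r - F a) ≤ 2 * t * (a - z) + t * (r - a) + t * (z - p) ∧
    ∀ j ∈ J, j.1 < a → j.2 ≤ r
  have invmono : ∀ a b r, a ≤ b →
      (2 + t) * (F a - F z) + 2 * (F r - F a) ≤ 2 * t * (a - z) + t * (r - a) + t * (z - p) →
      (2 + t) * (F b - F z) + 2 * (F r - F b) ≤ 2 * t * (b - z) + t * (r - b) + t * (z - p) := by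
    intro a b r hab h
    have := mul_le_mul_of_nonneg_left (lip a b hab) ht0
    linarith
  let N : Finset ℝ := {x, z} ∪ E ∪ J.image Prod.fst ∪ J.image Prod.snd
  have hN1 : ∀ j ∈ J, j.1 ∈ N := fun j hj => by
    simp only [N, Finset.mem_union, Finset.mem_image]
    exact Or.inl (Or.inr ⟨j, hj, rfl⟩)
  have hN2 : ∀ j ∈ J, j.2 ∈ N := fun j hj => by
    simp only [N, Finset.mem_union, Finset.mem_image]
    exact Or.inr ⟨j, hj, rfl⟩
  have hNE : ∀ e ∈ E, e ∈ N := fun e he => by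
    simp only [N, Finset.mem_union]
    exact Or.inl (Or.inl (Or.inr he))
  have hNx : x ∈ N := by simp [N]
  have hNz : z ∈ N := by simp [N]
  have hmaxJ : ∀ r, (∃ j ∈ J, j.1 ≤ r ∧ r < j.2) → ∃ j ∈ J, j.1 ≤ r ∧ r < j.2 ∧
      ∀ k ∈ J, k.1 ≤ r → k.2 ≤ j.2 := by
    intro r ⟨j, hj, h1, h2⟩
    obtain ⟨m, hm, hmax⟩ := (J.filter (fun j => j.1 ≤ r ∧ r < j.2)).exists_max_image Prod.snd
      ⟨j, Finset.mem_filter.2 ⟨hj, h1, h2⟩⟩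
    obtain ⟨hm0, hm1, hm2⟩ := Finset.mem_filter.1 hm
    refine ⟨m, hm0, hm1, hm2, fun k hk hk1 => ?_⟩
    by_cases h : r < k.2
    · exact hmax k (Finset.mem_filter.2 ⟨hk, hk1, h⟩)
    · linarith
  have hstart : ∃ r ∈ N, ∃ a, St a r := by
    by_cases h : ∃ j ∈ J, j.1 ≤ z ∧ z < j.2
    · obtain ⟨j, hj, h1, h2, h3⟩ := hmaxJ z h
      obtain ⟨k1, k2, k3, k4⟩ := hJ j hj
      refine ⟨j.2, hN2 j hj, z, le_rfl, h2.le, k3, ?_, fun k hk hk1 => h3 k hk hk1.le⟩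
      have := mF h1
      have := mul_le_mul_of_nonneg_left k1 ht0
      linarith
    · push Not at h
      refine ⟨z, hNz, z, le_rfl, le_rfl, hzx.trans hxq, ?_, fun k hk hk1 => h k hk hk1.le⟩
      have := mul_nonneg ht0 (sub_nonneg.2 hpz)
      linarith
  have step : ∀ a r, St a r → r < x → ∃ r' ∈ N, r < r' ∧ ∃ a', St a' r' := by
    rintro a r ⟨s1, s2, s3, s4, s5⟩ hrx
    by_cases h : ∃ j ∈ J, j.1 ≤ r ∧ r < j.2
    · obtain ⟨j, hj, h1, h2, h3⟩ := hmaxJ r h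
      obtain ⟨k1, k2, k3, k4⟩ := hJ j hj
      have haj : a ≤ j.1 := by
        by_contra hc
        have := s5 j hj (not_le.1 hc)
        linarith
      refine ⟨j.2, hN2 j hj, h2, r, by linarith, h2.le, k3, ?_, fun k hk hk1 => h3 k hk hk1.le⟩
      have i1 := invmono a j.1 r haj s4
      have i2 := mul_nonneg (sub_nonneg.2 ht2) (sub_nonneg.2 (mF h1))
      linarith
    · push Not at h
      obtain ⟨r', hr', hmin⟩ := (({x} ∪ E ∪ J.image Prod.fst).filter (fun y => r < y)).exists_min_image id
        ⟨x, by simp [hrx]⟩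
      simp only [id] at hmin
      obtain ⟨m1, m2⟩ := Finset.mem_filter.1 hr'
      have hr'N : r' ∈ N := by
        simp only [Finset.mem_union, Finset.mem_singleton, Finset.mem_image] at m1
        rcases m1 with (m1 | m1) | ⟨j, hj, m1⟩
        · rw [m1]; exact hNx
        · exact hNE _ m1
        · rw [← m1]; exact hN1 j hj
      have hr'x : r' ≤ x := hmin x (by simp [hrx])
      have hr'E : ∀ e ∈ E, r < e → r' ≤ e := fun e he h1 => hmin e (by simp [he, h1])
      have hr'J : ∀ j ∈ J, r < j.1 → r' ≤ j.1 := fun j hj h1 => hmin j.1 (by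
        simp only [Finset.mem_filter, Finset.mem_union, Finset.mem_image]
        exact ⟨Or.inr ⟨j, hj, rfl⟩, h1⟩)
      have hF : F r' = F r := by
        apply hcov r r' m2 (by linarith) hr'x
        · intro e he ⟨h1, h2⟩
          have := hr'E e he h1
          linarith
        · intro j hj
          by_cases h1 : j.1 ≤ r
          · exact Or.inl (h j hj h1)
          · exact Or.inr (hr'J j hj (not_le.1 h1))
      refine ⟨r', hr'N, m2, r', by linarith, le_rfl, by linarith, ?_, ?_⟩
      · have i1 := invmono a r r s2 s4
        have i2 := mul_le_mul_of_nonneg_left m2.le ht0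
        rw [hF]
        linarith
      · intro j hj h1
        by_cases h2 : j.1 ≤ r
        · linarith [h j hj h2]
        · linarith [hr'J j hj (not_le.1 h2)]
  obtain ⟨r0, hr0, a0, ha0⟩ := hstart
  obtain ⟨r, hr, hmax⟩ := (N.filter (fun r => ∃ a, St a r)).exists_max_image id
    ⟨r0, Finset.mem_filter.2 ⟨hr0, a0, ha0⟩⟩
  simp only [id] at hmax
  obtain ⟨hrN, a, hSt⟩ := Finset.mem_filter.1 hr
  have hxr : x ≤ r := by
    by_contra hc
    obtain ⟨r', hr'N, hlt, a', h'⟩ := step a r hSt (not_le.1 hc)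
    have := hmax r' (Finset.mem_filter.2 ⟨hr'N, a', h'⟩)
    linarith
  obtain ⟨s1, s2, s3, s4, s5⟩ := hSt
  refine ⟨r, hxr, s3, ?_⟩
  have := invmono a r r s2 s4
  linarith

theorem step1 {t : ℝ} (ht0 : 0 ≤ t) (ht1 : t ≤ 1) {E : Finset ℝ} {F G : ℝ → ℝ} {p q : ℝ}
    (h : GBase E F G p q) (hb : GBad t E F G p q)
    (ih : ∀ (E' : Finset ℝ) (u v : ℝ), E'.card < E.card → GBase E' F G u v →
      GBad t E' F G u v → False) (x : ℝ) (hpx : p ≤ x) (hxq : x ≤ q) :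
    F x - F p ≤ t * (x - p) := by
  obtain ⟨u, hu, hmax⟩ := E.exists_max_image (fun e => F e - t * e) ⟨p, h.hp⟩
  have hall : ∀ y, p ≤ y → y ≤ q → F y - t * y ≤ F u - t * u := by
    intro y hpy hyq
    obtain ⟨e1, he1, hmax1⟩ := (E.filter (fun e => e ≤ y)).exists_max_image id
      ⟨p, Finset.mem_filter.2 ⟨h.hp, hpy⟩⟩
    obtain ⟨e2, he2, hmin2⟩ := (E.filter (fun e => y ≤ e)).exists_min_image id
      ⟨q, Finset.mem_filter.2 ⟨h.hq, hyq⟩⟩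
    simp only [id] at hmax1 hmin2
    obtain ⟨a1, a2⟩ := Finset.mem_filter.1 he1
    obtain ⟨b1, b2⟩ := Finset.mem_filter.1 he2
    have m1 := hmax e1 a1
    have m2 := hmax e2 b1
    have f1 := h.mF a2
    have f2 := h.mF b2
    have g1 := h.mG a2
    have g2 := h.mG b2
    have c1 := h.sum e1
    have c2 := h.sum e2
    have c3 := h.sum y
    rcases h.pure e1 e2 (h.lo e1 a1) (a2.trans b2) (h.hi e2 b1) (by
      intro e he ⟨h1, h2⟩
      rcases le_total e y with h3 | h3
      · linarith [hmax1 e (Finset.mem_filter.2 ⟨he, h3⟩)]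
      · linarith [hmin2 e (Finset.mem_filter.2 ⟨he, h3⟩)]) with h1 | h1
    · have := mul_le_mul_of_nonneg_left a2 ht0
      linarith
    · have := mul_le_mul_of_nonneg_left b2 (sub_nonneg.2 ht1)
      linarith
  by_cases hup : F u - t * u ≤ F p - t * p
  · have := hall x hpx hxq
    linarith
  exfalso
  push Not at hup
  have hpu : p < u := by
    refine lt_of_le_of_ne (h.lo u hu) ?_
    rintro rfl
    exact lt_irrefl _ hup
  have huq := h.hi u hu
  refine ih (E.filter (fun e => u ≤ e ∧ e ≤ q)) u q ?_ (h.sub hu h.hq huq) ?_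
  · apply Finset.card_lt_card
    refine ⟨Finset.filter_subset _ _, fun hsub => ?_⟩
    have := (Finset.mem_filter.1 (hsub h.hp)).2.1
    linarith
  · intro c hc
    obtain ⟨hcE, hc1, hc2⟩ := Finset.mem_filter.1 hc
    rcases hb c hcE with ⟨ρ, h1, h2, h3⟩ | ⟨ρ, h1, h2, h3⟩
    · left
      by_cases h5 : u ≤ c - ρ
      · exact ⟨ρ, h1, h5, h3⟩
      · push Not at h5
        have a5 := hall (c - ρ) h2 (by linarith)
        have a6 : F (min (c + (c - u)) q) ≤ F (min (c + ρ) q) :=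
          h.mF (min_le_min (by linarith) le_rfl)
        have a7 : F (min (c + (c - u)) q) - F u < t * (c - u) := by linarith
        have a9 : c - u ≠ 0 := by
          intro h0
          have a10 : min (c + (c - u)) q = u := by
            rw [h0, add_zero, min_eq_left hc2]; linarith
          rw [a10, h0] at a7; linarith
        refine ⟨c - u, lt_of_le_of_ne (by linarith) a9.symm, by linarith, ?_⟩
        rw [sub_sub_cancel]; exact a7
    · right
      refine ⟨ρ, h1, h2, ?_⟩
      have := h.mG (max_le_max (le_refl (c - ρ)) hpu.le)
      linarith

theorem uc_exists {t : ℝ} (ht0 : 0 ≤ t) (ht1 : t < 1) (hc : t ^ 3 + t ^ 2 + 3 * t < 2)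
    {E : Finset ℝ} {F G : ℝ → ℝ} {p q z x : ℝ}
    (h : GBase E F G p q) (hpz : p ≤ z) (hzx : z ≤ x) (hxq : x ≤ q)
    (hG : G q - G p < t * (q - z)) (hgap : (1 - t) * (q - p) < t * (x - z))
    (J : Finset (ℝ × ℝ))
    (hJ : ∀ j ∈ J, p ≤ j.1 ∧ j.1 ≤ j.2 ∧ j.2 ≤ q ∧ 2 * (F j.2 - F j.1) ≤ t * (j.2 - j.1)) :
    ∃ r r', r < r' ∧ z ≤ r ∧ r' ≤ x ∧ (∀ e ∈ E, ¬ (r < e ∧ e < r')) ∧ G r' = G r ∧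
      ∀ j ∈ J, j.2 ≤ r ∨ r' ≤ j.1 := by
  by_contra hno
  push Not at hno
  obtain ⟨r, h1, h2, h3⟩ := cover_bound ht0 (by linarith) h.mF (fun x y => h.lipF) E hpz hzx hxq
    J hJ (by
      intro r r' hr hz hx hE hj
      rcases h.pure r r' (by linarith) hr.le (by linarith) (fun e he => hE e he) with h1 | h1
      · exact h1
      · obtain ⟨j, hjJ, h4, h5⟩ := hno r r' hr hz hx (fun e he k1 => not_lt.1 (fun k2 => hE e he ⟨k1, k2⟩)) h1
        rcases hj j hjJ with h6 | h6 <;> linarith)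
  have g1 := h.mG h2
  have g2 := h.mG hpz
  have c1 := h.sum r
  have c2 := h.sum z
  have k1 : (2 - t) * (r - z) - t * (z - p) ≤ (2 + t) * (G r - G z) := by
    have : F r - F z = (r - z) - (G r - G z) := by linarith
    rw [this] at h3
    linarith
  have k2 : (2 + t) * (G r - G z) ≤ (2 + t) * (t * (q - z)) :=
    mul_le_mul_of_nonneg_left (by linarith) (by linarith)
  have k3 : (2 - t) * (x - z) ≤ (2 - t) * (r - z) :=
    mul_le_mul_of_nonneg_left (by linarith) (by linarith)
  have k4 : t * ((2 - t) * (x - z)) ≤ t * ((2 + t) * (t * (q - z)) + t * (z - p)) :=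
    mul_le_mul_of_nonneg_left (by linarith) ht0
  have k5 : (2 - t) * ((1 - t) * (q - p)) < (2 - t) * (t * (x - z)) :=
    mul_lt_mul_of_pos_left hgap (by linarith)
  have k6 : 0 ≤ (2 - (t ^ 3 + t ^ 2 + 3 * t)) * (q - p) :=
    mul_nonneg (by linarith) (by linarith)
  have k7 : 0 ≤ (t ^ 2 * (1 + t)) * (z - p) := mul_nonneg (by positivity) (by linarith)
  nlinarith

theorem no_sys {t : ℝ} (ht0 : 0 ≤ t) (ht1 : t < 1) (hc : t ^ 3 + t ^ 2 + 3 * t < 2) :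
    ∀ (n : ℕ) (E : Finset ℝ) (F G : ℝ → ℝ) (p q : ℝ), E.card = n → GBase E F G p q →
      GBad t E F G p q → False := by
  classical
  intro n
  induction n using Nat.strong_induction_on with
  | _ n IH =>
  intro E F G p q hn h hb
  have ih : ∀ (E' : Finset ℝ) (F G : ℝ → ℝ) (u v : ℝ), E'.card < E.card → GBase E' F G u v →
      GBad t E' F G u v → False := fun E' F G u v hlt => IH _ (hn ▸ hlt) E' F G u v rfl
  have S1 := step1 ht0 ht1.le h hb (fun E' u v => ih E' F G u v)
  have S2 := step1 ht0 ht1.le h.reflect hb.reflect (by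
    intro E' u v hlt h1 h2
    rw [Finset.card_image_of_injective _ neg_injective] at hlt
    exact ih E' _ _ u v hlt h1 h2)
  replace S2 : ∀ y, p ≤ y → y ≤ q → G q - G y ≤ t * (q - y) := by
    intro y h1 h2
    have := S2 (-y) (by linarith) (by linarith)
    simp only [neg_neg] at this
    linarith
  have hex : ∀ c, ∃ ρ ω, c ∈ E → (GWhite t F p q c ρ ∨ GBlack t G p q c ω) := by
    intro c
    by_cases hcE : c ∈ E
    · rcases hb c hcE with ⟨ρ, h1⟩ | ⟨ω, h1⟩
      · exact ⟨ρ, 0, fun _ => Or.inl h1⟩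
      · exact ⟨0, ω, fun _ => Or.inr h1⟩
    · exact ⟨0, 0, fun hh => absurd hh hcE⟩
  choose ρ ω hρω using hex
  have hpW : GBlack t G p q p (ω p) := by
    rcases hρω p h.hp with h1 | h1
    · have := h1.1
      have := h1.2.1
      linarith
    · exact h1
  have hqW : GWhite t F p q q (ρ q) := by
    rcases hρω q h.hq with h1 | h1
    · exact h1
    · have := h1.1
      have := h1.2.1
      linarith
  obtain ⟨x, hx, hxmin⟩ := (E.filter (fun c => GWhite t F p q c (ρ c) ∧ q ≤ c + ρ c)).exists_min_image
    id ⟨q, Finset.mem_filter.2 ⟨h.hq, hqW, by linarith [hqW.1]⟩⟩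
  obtain ⟨z, hz, hzmax⟩ := (E.filter (fun c => GBlack t G p q c (ω c) ∧ c - ω c ≤ p)).exists_max_image
    id ⟨p, Finset.mem_filter.2 ⟨h.hp, hpW, by linarith [hpW.1]⟩⟩
  simp only [id] at hxmin hzmax
  obtain ⟨hxE, ⟨x1, x2, x3⟩, x4⟩ := Finset.mem_filter.1 hx
  obtain ⟨hzE, ⟨z1, z2, z3⟩, z4⟩ := Finset.mem_filter.1 hz
  rw [min_eq_right x4] at x3
  rw [max_eq_right z4] at z3
  have hxq := h.hi x hxE
  have hpz := h.lo z hzE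
  have hFb : F q - F p < t * (x - p) := by
    have := S1 (x - ρ x) x2 (by linarith)
    linarith
  have hGb : G q - G p < t * (q - z) := by
    have := S2 (z + ω z) (by linarith) z2
    linarith
  have hgap : (1 - t) * (q - p) < t * (x - z) := by
    have := h.sum p
    have := h.sum q
    linarith
  have hpq : p ≤ q := h.lo q h.hq
  have hzx : z ≤ x := by
    by_contra hcon
    push Not at hcon
    have a1 := mul_nonneg (sub_nonneg.2 ht1.le) (sub_nonneg.2 hpq)
    have a2 := mul_nonneg ht0 (sub_nonneg.2 hcon.le)
    linarith
  -- the uncovered interval inside the set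
  obtain ⟨r, r', u1, u2, u3, u4, u5, u6⟩ := uc_exists ht0 ht1 hc h hpz hzx hxq hGb hgap
    ((E.filter (fun c => GWhite t F p q c (ρ c) ∧ c < x)).image (fun c => (c - ρ c, c + ρ c)))
    (by
      intro j hj
      obtain ⟨c, hc0, rfl⟩ := Finset.mem_image.1 hj
      obtain ⟨hcE, hcW, hcx⟩ := Finset.mem_filter.1 hc0
      have hcq : c + ρ c < q := by
        by_contra hcon
        have := hxmin c (Finset.mem_filter.2 ⟨hcE, hcW, not_lt.1 hcon⟩)
        linarith
      obtain ⟨w1, w2, w3⟩ := hcW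
      rw [min_eq_left hcq.le] at w3
      refine ⟨w2, ?_, hcq.le, ?_⟩
      · dsimp only; linarith
      · dsimp only; linarith)
  replace u6 : ∀ c ∈ E, c < x → GWhite t F p q c (ρ c) → c + ρ c ≤ r ∨ r' ≤ c - ρ c := by
    intro c hcE hcx hcW
    exact u6 _ (Finset.mem_image_of_mem _ (Finset.mem_filter.2 ⟨hcE, hcW, hcx⟩))
  obtain ⟨s, s', v1, v2, v3, v4, v5, v6⟩ := uc_exists (z := -x) (x := -z) ht0 ht1 hc h.reflect
    (by linarith) (by linarith) (by linarith) (by simp only [neg_neg]; linarith) (by linarith)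
    ((E.filter (fun c => GBlack t G p q c (ω c) ∧ z < c)).image
      (fun c => (-(c + ω c), -(c - ω c))))
    (by
      intro j hj
      obtain ⟨c, hc0, rfl⟩ := Finset.mem_image.1 hj
      obtain ⟨hcE, hcW, hcx⟩ := Finset.mem_filter.1 hc0
      have hcq : p < c - ω c := by
        by_contra hcon
        have := hzmax c (Finset.mem_filter.2 ⟨hcE, hcW, not_lt.1 hcon⟩)
        linarith
      obtain ⟨w1, w2, w3⟩ := hcW
      rw [max_eq_left hcq.le] at w3
      refine ⟨?_, ?_, ?_, ?_⟩
      · dsimp only; linarith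
      · dsimp only; linarith
      · dsimp only; linarith
      · simp only [neg_neg]; linarith)
  replace v6 : ∀ c ∈ E, z < c → GBlack t G p q c (ω c) → c + ω c ≤ -s' ∨ -s ≤ c - ω c := by
    intro c hcE hcx hcW
    rcases v6 _ (Finset.mem_image_of_mem _ (Finset.mem_filter.2 ⟨hcE, hcW, hcx⟩)) with h1 | h1
    · right; dsimp only at h1; linarith
    · left; dsimp only at h1; linarith
  replace v4 : ∀ e ∈ E, ¬ (-s' < e ∧ e < -s) := by
    intro e he ⟨h1, h2⟩
    exact v4 (-e) (Finset.mem_image_of_mem _ he) ⟨by linarith, by linarith⟩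
  replace v5 : F (-s) = F (-s') := by
    linarith
  obtain ⟨d, hd⟩ : ∃ d, d = -s' := ⟨_, rfl⟩
  obtain ⟨d', hd'⟩ : ∃ d', d' = -s := ⟨_, rfl⟩
  rw [← hd, ← hd'] at v4 v5 v6
  have w1 : d < d' := by linarith
  have w2 : z ≤ d := by linarith
  have w3 : d' ≤ x := by linarith
  -- the two gaps are disjoint
  have hdis : r' ≤ d ∨ d' ≤ r := by
    by_contra hcon
    push Not at hcon
    obtain ⟨c1, c2⟩ := hcon
    have lt : max r d < min r' d' := by
      rw [max_lt_iff, lt_min_iff, lt_min_iff]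
      exact ⟨⟨u1, c2⟩, c1, w1⟩
    have g1 := h.mG (le_max_left r d)
    have g2 := h.mG lt.le
    have g3 := h.mG (min_le_left r' d')
    have f1 := h.mF (le_max_right r d)
    have f2 := h.mF lt.le
    have f3 := h.mF (min_le_right r' d')
    have e1 := h.sum (max r d)
    have e2 := h.sum (min r' d')
    linarith
  rcases hdis with hd1 | hd1
  · obtain ⟨E', u, v, k1, k2, k3⟩ := sandwich ht1.le h (by linarith) u1 hd1 w1 (by linarith) u4 v4
      u5 v5 (by
        intro c hcE hc1 hc2
        rcases hρω c hcE with h1 | h1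
        · left
          refine ⟨_, h1, ?_⟩
          rcases u6 c hcE (by linarith) h1 with h2 | h2
          · have := h1.1
            linarith
          · exact h2
        · right
          refine ⟨_, h1, ?_⟩
          rcases v6 c hcE (by linarith) h1 with h2 | h2
          · exact h2
          · have := h1.1
            linarith)
    exact ih E' F G u v k1 k2 k3
  · obtain ⟨E', u, v, k1, k2, k3⟩ := sandwich ht1.le h.swap (by linarith) w1 hd1 u1 (by linarith)
      v4 u4 v5 u5 (by
        intro c hcE hc1 hc2
        rcases hρω c hcE with h1 | h1
        · right
          refine ⟨ρ c, ?_⟩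
          rcases u6 c hcE (by linarith) h1 with h2 | h2
          · refine ⟨⟨h1.1, by linarith, ?_⟩, h2⟩
            have := h1.2.2
            rw [min_eq_left (by linarith)] at this
            rw [max_eq_left h1.2.1]
            exact this
          · have := h1.1
            linarith
        · left
          refine ⟨ω c, ?_⟩
          rcases v6 c hcE (by linarith) h1 with h2 | h2
          · have := h1.1
            linarith
          · refine ⟨⟨h1.1, by linarith, ?_⟩, h2⟩
            have := h1.2.2
            rw [max_eq_left (by linarith)] at this
            rw [min_eq_left h1.2.1]
            exact this)
    exact ih E' G F u v k1 k2 k3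

/-- Cumulative measure of the configuration. -/
noncomputable def cumF (H : Set ℝ) (x : ℝ) : ℝ := ∫ y in (0 : ℝ)..x, H.indicator (fun _ => (1 : ℝ)) y

theorem cumF_sub {H : Set ℝ} (hH : MeasurableSet H) {u v : ℝ} (huv : u ≤ v) :
    cumF H v - cumF H u = (volume (H ∩ Ioo u v)).toReal := by
  have hint : ∀ a b : ℝ, IntervalIntegrable (H.indicator (fun _ => (1 : ℝ))) volume a b := by
    intro a b
    have h1 : IntervalIntegrable (fun _ : ℝ => (1 : ℝ)) volume a b := intervalIntegrable_const
    exact ⟨h1.1.indicator hH, h1.2.indicator hH⟩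
  unfold cumF
  rw [intervalIntegral.integral_interval_sub_left (hint _ _) (hint _ _),
    intervalIntegral.integral_of_le huv, integral_Ioc_eq_integral_Ioo,
    setIntegral_indicator hH, setIntegral_const, inter_comm]
  simp [Measure.real]

theorem cumF_bounds {H : Set ℝ} (hH : MeasurableSet H) {u v : ℝ} (huv : u ≤ v) :
    0 ≤ cumF H v - cumF H u ∧ cumF H v - cumF H u ≤ v - u := by
  rw [cumF_sub hH huv]
  refine ⟨ENNReal.toReal_nonneg, ?_⟩
  calc (volume (H ∩ Ioo u v)).toReal ≤ (volume (Ioo u v)).toReal :=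
        ENNReal.toReal_mono (by simp) (measure_mono inter_subset_right)
    _ = v - u := by rw [Real.volume_Ioo, ENNReal.toReal_ofReal (by linarith)]

theorem cumF_full {H : Set ℝ} (hH : MeasurableSet H) {u v : ℝ} (huv : u ≤ v) (h : Ioo u v ⊆ H) :
    cumF H v - cumF H u = v - u := by
  rw [cumF_sub hH huv, inter_eq_right.2 h, Real.volume_Ioo, ENNReal.toReal_ofReal (by linarith)]

theorem cumF_empty {H : Set ℝ} (hH : MeasurableSet H) {u v : ℝ} (huv : u ≤ v)
    (h : ∀ w, u < w → w < v → w ∉ H) : cumF H v - cumF H u = 0 := by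
  have : H ∩ Ioo u v = ∅ := by
    ext w
    simp only [mem_inter_iff, mem_Ioo, mem_empty_iff_false, iff_false]
    rintro ⟨h1, h2, h3⟩
    exact h w h2 h3 h1
  rw [cumF_sub hH huv, this]; simp

/-- If `0 ≤ δ` and `4δ³ + 2δ² + 3δ < 1`, then every configuration `C` has an endpoint `c`
such that `δ ≤ λ(C | I_ω(c)) ≤ 1 - δ` for all `ω > 0`. -/
theorem exists_good_endpoint (δ : ℝ) (hδ : 0 ≤ δ)
    (hcubic : 4 * δ ^ 3 + 2 * δ ^ 2 + 3 * δ < 1) (C : Config) :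
    ∃ c ∈ C.endpoints, ∀ ω > 0,
      δ ≤ relMeasure C.carrier c ω ∧ relMeasure C.carrier c ω ≤ 1 - δ := by
  classical
  by_contra hno
  push Not at hno
  obtain ⟨t, ht⟩ : ∃ t, t = 2 * δ := ⟨_, rfl⟩
  have ht0 : 0 ≤ t := by linarith
  have hc : t ^ 3 + t ^ 2 + 3 * t < 2 := by rw [ht]; linarith
  have ht1 : t < 1 := by
    by_contra hcon
    push Not at hcon
    have : 0 ≤ t ^ 3 + t ^ 2 := by positivity
    linarith
  have hH : MeasurableSet C.carrier :=
    measurableSet_Iio.union (MeasurableSet.iUnion fun i => measurableSet_Ioo)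
  obtain ⟨F, hF⟩ : ∃ F, F = cumF C.carrier := ⟨_, rfl⟩
  obtain ⟨G, hG⟩ : ∃ G : ℝ → ℝ, G = fun x => x - F x := ⟨_, rfl⟩
  have hsum : ∀ x, F x + G x = x := fun x => by rw [hG]; ring
  have mF : Monotone F := fun x y hxy => by
    have := (cumF_bounds hH hxy).1
    rw [hF]; linarith
  have mG : Monotone G := fun x y hxy => by
    have := (cumF_bounds hH hxy).2
    rw [← hF] at this
    have := hsum x
    have := hsum y
    linarith
  obtain ⟨k, -, hk⟩ := (Finset.univ : Finset (Fin C.r)).exists_max_image C.b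
    ⟨⟨0, C.hr⟩, Finset.mem_univ _⟩
  replace hk : ∀ i, C.b i ≤ C.b k := fun i => hk i (Finset.mem_univ i)
  obtain ⟨q, hq⟩ : ∃ q, q = C.b k := ⟨_, rfl⟩
  rw [← hq] at hk
  have hq0 : 0 < q := by
    have := C.ha k
    have := C.hab k
    linarith
  let E : Finset ℝ := insert 0 (Finset.univ.image C.a ∪ Finset.univ.image C.b)
  have hE : ∀ e, e ∈ E ↔ e ∈ C.endpoints := by
    intro e
    simp [E, Config.endpoints]
  have hbounds : ∀ e ∈ E, 0 ≤ e ∧ e ≤ q := by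
    intro e he
    rw [hE] at he
    rcases he with rfl | ⟨i, rfl⟩ | ⟨i, rfl⟩
    · exact ⟨le_rfl, hq0.le⟩
    · exact ⟨(C.ha i).le, (C.hab i).le.trans (hk i)⟩
    · exact ⟨((C.ha i).trans (C.hab i)).le, hk i⟩
  have hcar : ∀ w, w ∈ C.carrier ↔ w < 0 ∨ ∃ i, C.a i < w ∧ w < C.b i := by
    intro w
    simp [Config.carrier]
  have hbase : GBase E F G 0 q := by
    refine ⟨mF, mG, hsum, fun e he => (hbounds e he).1, fun e he => (hbounds e he).2,
      by simp [E], ?_, ?_⟩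
    · rw [hE, hq]; exact Or.inr (Or.inr ⟨k, rfl⟩)
    · intro x y hx hxy hyq hno
      by_cases hw : ∃ w, x < w ∧ w < y ∧ w ∈ C.carrier
      · right
        obtain ⟨w, h1, h2, h3⟩ := hw
        rcases (hcar w).1 h3 with h4 | ⟨i, h4, h5⟩
        · linarith
        · have a1 : C.a i ≤ x := by
            by_contra hcon
            exact hno (C.a i) ((hE _).2 (Or.inr (Or.inl ⟨i, rfl⟩))) ⟨not_le.1 hcon, by linarith⟩
          have a2 : y ≤ C.b i := by
            by_contra hcon
            exact hno (C.b i) ((hE _).2 (Or.inr (Or.inr ⟨i, rfl⟩))) ⟨by linarith, not_le.1 hcon⟩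
          have := cumF_full hH hxy (fun v hv => (hcar v).2 (Or.inr ⟨i, by linarith [hv.1],
            by linarith [hv.2]⟩))
          rw [← hF] at this
          have := hsum x
          have := hsum y
          linarith
      · left
        push Not at hw
        have := cumF_empty hH hxy hw
        rw [← hF] at this
        linarith
  refine no_sys ht0 ht1 hc _ E F G 0 q rfl hbase ?_
  intro c hcE
  obtain ⟨ω, hω, hbad⟩ := hno c ((hE c).1 hcE)
  obtain ⟨c0, cq⟩ := hbounds c hcE
  have hm := cumF_sub hH (show c - ω ≤ c + ω by linarith)
  rw [← hF] at hm
  have hrel : relMeasure C.carrier c ω = (F (c + ω) - F (c - ω)) / (2 * ω) := by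
    rw [hm]; rfl
  rw [hrel] at hbad
  have h2ω : 0 < 2 * ω := by linarith
  by_cases hδ1 : δ ≤ (F (c + ω) - F (c - ω)) / (2 * ω)
  · right
    have hb2 := hbad hδ1
    rw [lt_div_iff₀ h2ω] at hb2
    have hGd : G (c + ω) - G (c - ω) < t * ω := by
      have := hsum (c + ω)
      have := hsum (c - ω)
      rw [ht]; linarith
    by_cases h5 : c + ω ≤ q
    · refine ⟨ω, hω, h5, ?_⟩
      have := mG (le_max_left (c - ω) 0)
      linarith
    · push Not at h5
      have a5 := cumF_empty hH h5.le (fun w h1 _ h3 => by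
        rcases (hcar w).1 h3 with h4 | ⟨i, h4, h6⟩
        · linarith
        · linarith [hk i])
      rw [← hF] at a5
      have a1 := hsum (c + ω)
      have a2 := hsum q
      have a6 : G (c - ω) ≤ G (max (c - (q - c)) 0) :=
        mG (le_trans (by linarith) (le_max_left _ _))
      have a8 : t * (c + ω - q) ≤ c + ω - q := by nlinarith
      have a7 : G q - G (max (c - (q - c)) 0) < t * (q - c) := by linarith
      have a9 : q - c ≠ 0 := by
        intro h0
        have a10 : max (c - (q - c)) 0 = q := by
          rw [h0, sub_zero, max_eq_left c0]; linarith
        rw [a10, h0] at a7; linarith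
      refine ⟨q - c, lt_of_le_of_ne (by linarith) a9.symm, by linarith, ?_⟩
      rw [add_sub_cancel]; exact a7
  · left
    push Not at hδ1
    rw [div_lt_iff₀ h2ω] at hδ1
    have hFd : F (c + ω) - F (c - ω) < t * ω := by
      rw [ht]; linarith
    by_cases h5 : 0 ≤ c - ω
    · refine ⟨ω, hω, h5, ?_⟩
      have := mF (min_le_left (c + ω) q)
      linarith
    · push Not at h5
      have a5 := cumF_full hH h5.le (fun w hw => (hcar w).2 (Or.inl hw.2))
      rw [← hF] at a5
      have a6 : F (min (c + c) q) ≤ F (c + ω) :=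
        mF (le_trans (min_le_left _ _) (by linarith))
      have a8 : t * (ω - c) ≤ ω - c := by nlinarith
      have a7 : F (min (c + c) q) - F 0 < t * c := by linarith
      have a9 : c ≠ 0 := by
        intro h0
        rw [h0, add_zero, min_eq_left hq0.le] at a7; linarith
      refine ⟨c, lt_of_le_of_ne c0 a9.symm, by linarith, ?_⟩
      rw [sub_self]; exact a7
end

section
/- For every endpoint p ∈ F one has I_{μ(p)}(p) ⊆ (0,1). -/
open MeasureTheory Set Filter

/-- `C` is a counterexample to `K(δ)`: every endpoint `c` of `C` admits a radius `ω > 0`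
with `λ(C | I_ω(c)) ∉ [δ, 1-δ]`. -/
def IsCounterexample (δ : ℝ) (C : Config) : Prop :=
  ∀ c ∈ C.endpoints, ∃ ω > 0, relMeasure C.carrier c ω ∉ Icc δ (1 - δ)

/-- `ω(p) = sup {ω ≥ 0 : λ(C | I_ω(p)) ∉ (δ, 1-δ)}`. -/
noncomputable def omegaMax (C : Config) (δ p : ℝ) : ℝ :=
  sSup {ω : ℝ | 0 ≤ ω ∧ relMeasure C.carrier p ω ∉ Ioo δ (1 - δ)}

/-- An endpoint `p` is black if `λ(C | I_{ω(p)}(p)) ≥ 1 - δ`. -/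
def IsBlack (C : Config) (δ p : ℝ) : Prop :=
  p ∈ C.endpoints ∧ 1 - δ ≤ relMeasure C.carrier p (omegaMax C δ p)

/-- An endpoint `p` is white if `λ(C | I_{ω(p)}(p)) ≤ δ`. -/
def IsWhite (C : Config) (δ p : ℝ) : Prop :=
  p ∈ C.endpoints ∧ relMeasure C.carrier p (omegaMax C δ p) ≤ δ

/-- measure of `H` in the interval `(u, v)` -/
noncomputable def DD (H : Set ℝ) (u v : ℝ) : ℝ := (volume (H ∩ Ioo u v)).toReal

theorem rel_eq (H : Set ℝ) (p ω : ℝ) : relMeasure H p ω = DD H (p - ω) (p + ω) / (2 * ω) := rfl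

theorem DD_fin (H : Set ℝ) (u v : ℝ) : volume (H ∩ Ioo u v) ≠ ⊤ :=
  ne_top_of_le_ne_top (by simp) (measure_mono (inter_subset_right : H ∩ Ioo u v ⊆ Ioo u v))

theorem DD_nonneg (H : Set ℝ) (u v : ℝ) : 0 ≤ DD H u v := ENNReal.toReal_nonneg

theorem DD_le (H : Set ℝ) (u v : ℝ) (h : u ≤ v) : DD H u v ≤ v - u := by
  have h1 : DD H u v ≤ (volume (Ioo u v)).toReal :=
    ENNReal.toReal_mono (by simp) (measure_mono inter_subset_right)
  rwa [Real.volume_Ioo, ENNReal.toReal_ofReal (by linarith)] at h1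

theorem DD_full (H : Set ℝ) (u v : ℝ) (h : u ≤ v) (hs : Ioo u v ⊆ H) : DD H u v = v - u := by
  unfold DD
  rw [inter_eq_right.mpr hs, Real.volume_Ioo, ENNReal.toReal_ofReal (by linarith)]

theorem DD_zero (H : Set ℝ) (u v : ℝ) (hs : ∀ x ∈ H, u < x → x < v → False) : DD H u v = 0 := by
  unfold DD
  have : H ∩ Ioo u v = ∅ := by
    ext x
    simp only [mem_inter_iff, mem_Ioo, mem_empty_iff_false, iff_false]
    rintro ⟨h1, h2, h3⟩
    exact hs x h1 h2 h3
  simp [this]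

theorem DD_mono (H H' : Set ℝ) (u v : ℝ) (hs : ∀ x ∈ H, u < x → x < v → x ∈ H') :
    DD H u v ≤ DD H' u v := by
  refine ENNReal.toReal_mono (DD_fin _ _ _) (measure_mono ?_)
  rintro x ⟨h1, h2⟩
  exact ⟨hs x h1 h2.1 h2.2, h2⟩

theorem DD_add (H : Set ℝ) (hH : MeasurableSet H) (u v w : ℝ) (h1 : u ≤ v) (h2 : v ≤ w) :
    DD H u w = DD H u v + DD H v w := by
  unfold DD
  rw [← ENNReal.toReal_add (DD_fin _ _ _) (DD_fin _ _ _), ← measure_union]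
  · congr 1
    apply measure_congr
    have : ∀ᵐ x : ℝ, x ≠ v := by
      rw [ae_iff]; simp
    filter_upwards [this] with x hx
    apply propext
    change x ∈ H ∩ Ioo u w ↔ x ∈ H ∩ Ioo u v ∪ H ∩ Ioo v w
    simp only [mem_inter_iff, mem_union, mem_Ioo]
    constructor
    · rintro ⟨a, b, c⟩
      rcases lt_or_gt_of_ne hx with h | h
      · exact Or.inl ⟨a, b, h⟩
      · exact Or.inr ⟨a, h, c⟩
    · rintro (⟨a, b, c⟩ | ⟨a, b, c⟩)
      · exact ⟨a, b, by linarith⟩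
      · exact ⟨a, by linarith, c⟩
  · rw [Set.disjoint_left]
    rintro x ⟨_, _, h⟩ ⟨_, h', _⟩
    linarith
  · exact hH.inter measurableSet_Ioo

theorem meas_carrier (C : Config) : MeasurableSet C.carrier :=
  measurableSet_Iio.union (MeasurableSet.iUnion fun _ => measurableSet_Ioo)

theorem mem_carrier (C : Config) (x : ℝ) :
    x ∈ C.carrier ↔ x < 0 ∨ ∃ i, C.a i < x ∧ x < C.b i := by
  simp [Config.carrier]

theorem mem_endpoints (C : Config) (x : ℝ) :
    x ∈ C.endpoints ↔ x = 0 ∨ (∃ i, C.a i = x) ∨ ∃ i, C.b i = x := by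
  simp [Config.endpoints]

theorem b_mono (C : Config) {i j : Fin C.r} (h : i ≤ j) : C.b i ≤ C.b j := by
  rcases h.eq_or_lt with h | h
  · rw [h]
  · exact ((C.hba i j h).trans (C.hab j)).le

theorem a_mono (C : Config) {i j : Fin C.r} (h : i ≤ j) : C.a i ≤ C.a j := by
  rcases h.eq_or_lt with h | h
  · rw [h]
  · exact ((C.hab i).trans (C.hba i j h)).le

theorem DD_cont (H : Set ℝ) (hH : MeasurableSet H) (u : ℝ) :
    ContinuousOn (fun v => DD H u v) (Ici u) := by
  have : LipschitzOnWith 1 (fun v => DD H u v) (Ici u) := by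
    apply LipschitzOnWith.of_dist_le_mul
    have key : ∀ x y, u ≤ x → x ≤ y → |DD H u x - DD H u y| ≤ |x - y| := by
      intro x y hx hxy
      rw [DD_add H hH u x y hx hxy, abs_sub_comm x y, abs_of_nonneg (sub_nonneg.mpr hxy)]
      have := DD_le H x y hxy
      have := DD_nonneg H x y
      rw [abs_le]; constructor <;> linarith
    intro x hx y hy
    simp only [Real.dist_eq, NNReal.coe_one, one_mul]
    rcases le_total x y with h | h
    · exact key x y hx h
    · rw [abs_sub_comm, abs_sub_comm x y]; exact key y x hy h
  exact this.continuousOn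

theorem DD_sym_cont (H : Set ℝ) (hH : MeasurableSet H) (p : ℝ) :
    ContinuousOn (fun ω => DD H (p - ω) (p + ω)) (Ici 0) := by
  have : LipschitzOnWith 2 (fun ω => DD H (p - ω) (p + ω)) (Ici 0) := by
    apply LipschitzOnWith.of_dist_le_mul
    have key : ∀ x y, 0 ≤ x → x ≤ y →
        |DD H (p - x) (p + x) - DD H (p - y) (p + y)| ≤ 2 * |x - y| := by
      intro x y hx hxy
      rw [DD_add H hH (p - y) (p - x) (p + y) (by linarith) (by linarith),
        DD_add H hH (p - x) (p + x) (p + y) (by linarith) (by linarith),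
        abs_sub_comm x y, abs_of_nonneg (sub_nonneg.mpr hxy)]
      have := DD_le H (p - y) (p - x) (by linarith)
      have := DD_nonneg H (p - y) (p - x)
      have := DD_le H (p + x) (p + y) (by linarith)
      have := DD_nonneg H (p + x) (p + y)
      rw [abs_le]; constructor <;> linarith
    intro x hx y hy
    simp only [Real.dist_eq, NNReal.coe_ofNat]
    rcases le_total x y with h | h
    · exact key x y hx h
    · rw [abs_sub_comm, abs_sub_comm x y]; exact key y x hy h
  exact this.continuousOn

/-- truncation of a configuration to the intervals with index `≤ i` -/
def trunc (C : Config) (i : Fin C.r) : Config where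
  r := i.1 + 1
  hr := Nat.succ_pos _
  a := fun k => C.a ⟨k.1, lt_of_lt_of_le k.2 i.2⟩
  b := fun k => C.b ⟨k.1, lt_of_lt_of_le k.2 i.2⟩
  ha := fun _ => C.ha _
  hab := fun _ => C.hab _
  hba := fun _ _ h => C.hba _ _ h

theorem trunc_carrier (C : Config) (i : Fin C.r) (x : ℝ) :
    x ∈ (trunc C i).carrier ↔ x ∈ C.carrier ∧ x < C.b i := by
  rw [mem_carrier, mem_carrier]
  constructor
  · rintro (h | ⟨k, h1, h2⟩)
    · exact ⟨Or.inl h, by linarith [C.ha i, C.hab i]⟩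
    · refine ⟨Or.inr ⟨_, h1, h2⟩, lt_of_lt_of_le h2 (b_mono C ?_)⟩
      exact Nat.lt_succ_iff.mp k.2
  · rintro ⟨h | ⟨k, h1, h2⟩, h3⟩
    · exact Or.inl h
    · right
      have hk : k ≤ i := by
        by_contra hc
        have := C.hba i k (not_le.mp hc)
        linarith
      exact ⟨⟨k.1, Nat.lt_succ_of_le hk⟩, h1, h2⟩

theorem trunc_endpoints (C : Config) (i : Fin C.r) (x : ℝ) (h : x ∈ (trunc C i).endpoints) :
    x ∈ C.endpoints ∧ x ≤ C.b i := by
  rw [mem_endpoints] at h ⊢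
  rcases h with h | ⟨k, h⟩ | ⟨k, h⟩
  · exact ⟨Or.inl h, by linarith [C.ha i, C.hab i]⟩
  · refine ⟨Or.inr (Or.inl ⟨_, h⟩), ?_⟩
    rw [← h]
    have hk : (⟨k.1, lt_of_lt_of_le k.2 i.2⟩ : Fin C.r) ≤ i := Nat.lt_succ_iff.mp k.2
    exact (C.hab _).le.trans (b_mono C hk)
  · refine ⟨Or.inr (Or.inr ⟨_, h⟩), ?_⟩
    rw [← h]
    have hk : (⟨k.1, lt_of_lt_of_le k.2 i.2⟩ : Fin C.r) ≤ i := Nat.lt_succ_iff.mp k.2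
    exact b_mono C hk

theorem lemmaA (δ : ℝ) (C : Config) (hlast : IsGreatest (range C.b) 1)
    (hctr : IsCounterexample δ C)
    (hmin : ∀ C' : Config, C'.r < C.r → ¬ IsCounterexample δ C')
    (i : Fin C.r) (hi : C.b i < 1) :
    ∃ x > C.b i, (1 - 2 * δ) * (x - C.b i) < DD C.carrier (C.b i) x := by
  by_contra hcon
  push Not at hcon
  obtain ⟨l, hl⟩ := hlast.1
  have hil : i < l := by
    by_contra hc
    have := b_mono C (not_lt.mp hc)
    linarith
  refine hmin (trunc C i) (lt_of_le_of_lt (Nat.succ_le_of_lt hil) l.2) ?_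
  intro c hc
  obtain ⟨hcE, hcq⟩ := trunc_endpoints C i c hc
  obtain ⟨ω, hω, hf⟩ := hctr c hcE
  have hmC := meas_carrier C
  by_cases hlow : relMeasure C.carrier c ω < δ
  · refine ⟨ω, hω, fun h => ?_⟩
    have h1 := h.1
    have : relMeasure (trunc C i).carrier c ω ≤ relMeasure C.carrier c ω := by
      rw [rel_eq, rel_eq]
      gcongr
      exact DD_mono _ _ _ _ fun x hx _ _ => ((trunc_carrier C i x).1 hx).1
    linarith
  have hhigh : 1 - δ < relMeasure C.carrier c ω := by
    by_contra hcc
    exact hf ⟨not_lt.mp hlow, not_lt.mp hcc⟩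
  have hhigh2 : (1 - δ) * (2 * ω) < DD C.carrier (c - ω) (c + ω) := by
    rwa [rel_eq, lt_div_iff₀ (by linarith)] at hhigh
  have claim : ∀ ω' > 0, c + ω' ≤ C.b i →
      (1 - δ) * (2 * ω') < DD C.carrier (c - ω') (c + ω') →
      ∃ ω > 0, relMeasure (trunc C i).carrier c ω ∉ Icc δ (1 - δ) := by
    intro ω' hω' hle h
    refine ⟨ω', hω', fun hI => ?_⟩
    have h2 := hI.2
    rw [rel_eq, div_le_iff₀ (by linarith)] at h2
    have := DD_mono C.carrier (trunc C i).carrier (c - ω') (c + ω')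
      fun x hx _ hx2 => (trunc_carrier C i x).2 ⟨hx, by linarith⟩
    linarith
  rcases le_or_gt (c + ω) (C.b i) with hle | hgt
  · exact claim ω hω hle hhigh2
  have hr := hcon (c + ω) hgt
  have e1 := DD_add C.carrier hmC (c - ω) (c - (C.b i - c)) (c + ω) (by linarith) (by linarith)
  have e2 := DD_add C.carrier hmC (c - (C.b i - c)) (C.b i) (c + ω) (by linarith) (by linarith)
  have e3 := DD_le C.carrier (c - ω) (c - (C.b i - c)) (by linarith)
  rcases hcq.lt_or_eq with hlt | heq
  · refine claim (C.b i - c) (by linarith) (by linarith) ?_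
    have : c + (C.b i - c) = C.b i := by ring
    rw [this]
    linarith
  · exfalso
    have e4 := DD_le C.carrier (c - (C.b i - c)) (C.b i) (by linarith)
    rw [← heq] at e1 e2 e3 e4 hr
    linarith

theorem DD_right (C : Config) (hlast : IsGreatest (range C.b) 1) (x : ℝ) :
    DD C.carrier 1 x = 0 := by
  apply DD_zero
  intro y hy h1 h2
  rcases (mem_carrier C y).1 hy with h | ⟨i, h3, h4⟩
  · linarith
  · have := hlast.2 ⟨i, rfl⟩
    linarith

theorem lemmaA' (δ : ℝ) (hδ1 : 1 / 4 < δ) (hδ2 : δ < 1 / 2) (C : Config)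
    (hlast : IsGreatest (range C.b) 1)
    (hctr : IsCounterexample δ C)
    (hmin : ∀ C' : Config, C'.r < C.r → ¬ IsCounterexample δ C')
    (y : ℝ) (hy : y < 1) (hy' : ∃ j, C.a j ≤ y) :
    ∃ x > y, x ≤ 1 ∧ (1 - 2 * δ) * (x - y) ≤ DD C.carrier y x := by
  have hmC := meas_carrier C
  obtain ⟨j, hj, hmax⟩ : ∃ j, C.a j ≤ y ∧ ∀ k, C.a k ≤ y → k ≤ j := by
    classical
    obtain ⟨j0, hj0⟩ := hy'
    have hne : (Finset.univ.filter fun k => C.a k ≤ y).Nonempty := ⟨j0, by simp [hj0]⟩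
    refine ⟨_, (Finset.mem_filter.1 (Finset.max'_mem _ hne)).2, fun k hk => ?_⟩
    exact Finset.le_max' _ _ (by simp [hk])
  rcases lt_or_ge y (C.b j) with h | h
  · refine ⟨C.b j, h, hlast.2 ⟨j, rfl⟩, ?_⟩
    rw [DD_full C.carrier y (C.b j) h.le]
    · nlinarith
    · intro x hx
      exact (mem_carrier C x).2 (Or.inr ⟨j, lt_of_le_of_lt hj hx.1, hx.2⟩)
  · obtain ⟨x, hx, hD⟩ := lemmaA δ C hlast hctr hmin j (by linarith)
    have hz : ∀ w ≤ y, DD C.carrier (C.b j) w = 0 := by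
      intro w hw
      apply DD_zero
      intro z hz h1 h2
      rcases (mem_carrier C z).1 hz with h3 | ⟨k, h3, h4⟩
      · linarith [C.ha j, C.hab j]
      · have := b_mono C (hmax k (by linarith))
        linarith
    have hxy : y < x := by
      by_contra hc
      have := hz x (not_lt.mp hc)
      nlinarith
    have e := DD_add C.carrier hmC (C.b j) y x h hxy.le
    rw [hz y le_rfl] at e
    have hD2 : (1 - 2 * δ) * (x - y) ≤ DD C.carrier y x := by nlinarith
    rcases le_or_gt x 1 with h1 | h1
    · exact ⟨x, hxy, h1, hD2⟩
    · refine ⟨1, hy, le_rfl, ?_⟩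
      have e := DD_add C.carrier hmC y 1 x hy.le h1.le
      rw [DD_right C hlast] at e
      nlinarith

theorem lemmaB (δ : ℝ) (hδ1 : 1 / 4 < δ) (hδ2 : δ < 1 / 2) (C : Config)
    (hlast : IsGreatest (range C.b) 1)
    (hctr : IsCounterexample δ C)
    (hmin : ∀ C' : Config, C'.r < C.r → ¬ IsCounterexample δ C')
    (y : ℝ) (hy : y ≤ 1) (hy' : ∃ j, C.a j ≤ y) :
    (1 - 2 * δ) * (1 - y) ≤ DD C.carrier y 1 := by
  have hmC := meas_carrier C
  have hcont : ContinuousOn (fun x => DD C.carrier y x - (1 - 2 * δ) * (x - y)) (Icc y 1) :=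
    ((DD_cont C.carrier hmC y).mono Icc_subset_Ici_self).sub (by fun_prop)
  have hcl := hcont.preimage_isClosed_of_isClosed isClosed_Icc (isClosed_Ici (a := (0:ℝ)))
  have hcomp := isCompact_Icc.of_isClosed_subset hcl inter_subset_left
  obtain ⟨x, hx, hmax⟩ := hcomp.exists_isGreatest
    ⟨y, ⟨le_rfl, hy⟩, by
      have := DD_nonneg C.carrier y y
      simpa using this⟩
  obtain ⟨⟨hx1, hx2⟩, hx3⟩ := hx
  simp only [mem_preimage, mem_Ici] at hx3
  rcases hx2.eq_or_lt with h | h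
  · rw [h] at hx3; linarith
  · exfalso
    obtain ⟨j, hj⟩ := hy'
    obtain ⟨z, hz, hz1, hz2⟩ := lemmaA' δ hδ1 hδ2 C hlast hctr hmin x h ⟨j, by linarith⟩
    have e := DD_add C.carrier hmC y x z hx1 hz.le
    have := hmax (a := z) ⟨⟨by linarith, hz1⟩, by
      simp only [mem_preimage, mem_Ici]; nlinarith⟩
    linarith

theorem ep_bounds (C : Config) (hlast : IsGreatest (range C.b) 1) (p : ℝ)
    (hp : p ∈ C.endpoints) : 0 ≤ p ∧ p ≤ 1 := by
  have h1 : ∀ i, C.b i ≤ 1 := fun i => hlast.2 ⟨i, rfl⟩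
  rcases (mem_endpoints C p).1 hp with h | ⟨i, h⟩ | ⟨i, h⟩
  · rw [h]; norm_num
  · rw [← h]; exact ⟨(C.ha i).le, (C.hab i).le.trans (h1 i)⟩
  · rw [← h]; exact ⟨((C.ha i).trans (C.hab i)).le, h1 i⟩

theorem omega_bdd (δ : ℝ) (hδ2 : δ < 1 / 2) (C : Config)
    (hlast : IsGreatest (range C.b) 1) (p : ℝ) (hp : p ∈ C.endpoints) :
    BddAbove {ω : ℝ | 0 ≤ ω ∧ relMeasure C.carrier p ω ∉ Ioo δ (1 - δ)} := by
  have hmC := meas_carrier C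
  obtain ⟨h0, h1⟩ := ep_bounds C hlast p hp
  refine ⟨1 + 1 / (1 - 2 * δ), ?_⟩
  rintro ω ⟨hω, hf⟩
  by_contra hc
  push Not at hc
  have hd : 0 < 1 - 2 * δ := by linarith
  have hpos : 0 < 1 / (1 - 2 * δ) := by positivity
  apply hf
  have hk : 1 < (1 - 2 * δ) * ω := by
    have : 1 / (1 - 2 * δ) < ω := by linarith
    rw [div_lt_iff₀ hd] at this
    linarith
  have e1 := DD_add C.carrier hmC (p - ω) 0 (p + ω) (by linarith) (by linarith)
  have e2 := DD_add C.carrier hmC 0 1 (p + ω) (by linarith) (by linarith)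
  have e3 := DD_full C.carrier (p - ω) 0 (by linarith)
    (fun x hx => (mem_carrier C x).2 (Or.inl hx.2))
  have e4 := DD_le C.carrier 0 1 (by norm_num)
  have e5 := DD_nonneg C.carrier 0 1
  rw [DD_right C hlast] at e2
  rw [rel_eq]
  constructor
  · rw [lt_div_iff₀ (by linarith)]; nlinarith
  · rw [div_lt_iff₀ (by linarith)]; nlinarith

theorem omega_pos (δ : ℝ) (hδ2 : δ < 1 / 2) (C : Config)
    (hlast : IsGreatest (range C.b) 1) (hctr : IsCounterexample δ C)
    (p : ℝ) (hp : p ∈ C.endpoints) : 0 < omegaMax C δ p := by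
  obtain ⟨ω, hω, hf⟩ := hctr p hp
  exact lt_of_lt_of_le hω (le_csSup (omega_bdd δ hδ2 C hlast p hp)
    ⟨hω.le, fun h => hf (Ioo_subset_Icc_self h)⟩)

theorem black_or_white (δ : ℝ) (hδ2 : δ < 1 / 2) (C : Config)
    (hlast : IsGreatest (range C.b) 1) (hctr : IsCounterexample δ C)
    (p : ℝ) (hp : p ∈ C.endpoints) : IsBlack C δ p ∨ IsWhite C δ p := by
  obtain ⟨ω0, hω0, hf⟩ := hctr p hp
  have hbdd := omega_bdd δ hδ2 C hlast p hp
  set S := {ω : ℝ | 0 ≤ ω ∧ relMeasure C.carrier p ω ∉ Ioo δ (1 - δ)} with hS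
  have h0S : ω0 ∈ S := ⟨hω0.le, fun h => hf (Ioo_subset_Icc_self h)⟩
  have hcont : ContinuousOn (fun ω => relMeasure C.carrier p ω) (Icc ω0 (sSup S)) := by
    refine ContinuousOn.div ((DD_sym_cont C.carrier (meas_carrier C) p).mono ?_) (by fun_prop) ?_
    · intro x hx; exact hω0.le.trans hx.1
    · intro x hx; have := hx.1; linarith
  have hcl := hcont.preimage_isClosed_of_isClosed isClosed_Icc
    (isOpen_Ioo (a := δ) (b := 1 - δ)).isClosed_compl
  have hcomp := isCompact_Icc.of_isClosed_subset hcl inter_subset_left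
  obtain ⟨x, hx, hmax⟩ := hcomp.exists_isGreatest
    ⟨ω0, ⟨le_rfl, le_csSup hbdd h0S⟩, h0S.2⟩
  have hxS : sSup S = x := by
    apply le_antisymm
    · apply csSup_le ⟨ω0, h0S⟩
      intro y hy
      rcases le_total y ω0 with h | h
      · exact h.trans hx.1.1
      · exact hmax ⟨⟨h, le_csSup hbdd hy⟩, hy.2⟩
    · exact hx.1.2
  have hfin : relMeasure C.carrier p (omegaMax C δ p) ∉ Ioo δ (1 - δ) := by
    have : omegaMax C δ p = x := hxS
    rw [this]; exact hx.2
  by_cases h : relMeasure C.carrier p (omegaMax C δ p) ≤ δ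
  · exact Or.inr ⟨hp, h⟩
  · left
    refine ⟨hp, ?_⟩
    by_contra h2
    exact hfin ⟨not_le.mp h, not_le.mp h2⟩

theorem black_case (δ : ℝ) (hδ1 : 1 / 4 < δ) (hδ2 : δ < 1 / 2)
    (C : Config) (hlast : IsGreatest (range C.b) 1)
    (hctr : IsCounterexample δ C)
    (hmin : ∀ C' : Config, C'.r < C.r → ¬ IsCounterexample δ C')
    (vB : ℝ)
    (hvB : IsGreatest {v : ℝ | IsBlack C δ v ∧ v ≤ 1 / 2 ∧ 1 - v ≤ omegaMax C δ v} vB)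
    (p m : ℝ) (hp : IsBlack C δ p) (hBp : vB < p) (hm : 0 < m)
    (hmax : ∀ ω > 0, relMeasure C.carrier p ω ≤ relMeasure C.carrier p m) :
    0 ≤ p - m ∧ p + m ≤ 1 := by
  have hmC := meas_carrier C
  obtain ⟨h0, h1⟩ := ep_bounds C hlast p hp.1
  have hB0 := (ep_bounds C hlast vB hvB.1.1.1).1
  set F := relMeasure C.carrier p m with hF
  have hFge : 1 - δ ≤ F :=
    hp.2.trans (hmax _ (omega_pos δ hδ2 C hlast hctr p hp.1))
  have hDm : DD C.carrier (p - m) (p + m) = F * (2 * m) := by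
    rw [hF, rel_eq]; field_simp
  have hle1 : p + m ≤ 1 := by
    by_contra hc
    push Not at hc
    have e1 := DD_add C.carrier hmC (p - m) (p - (1 - p)) (p + m) (by linarith) (by linarith)
    have e2 := DD_add C.carrier hmC (p - (1 - p)) 1 (p + m) (by linarith) (by linarith)
    have e3 := DD_le C.carrier (p - m) (p - (1 - p)) (by linarith)
    rw [DD_right C hlast] at e2
    have e4 : DD C.carrier (p - (1 - p)) 1 ≤ F * (2 * (1 - p)) := by
      rcases h1.eq_or_lt with h | h
      · have := DD_le C.carrier (p - (1 - p)) 1 (by linarith)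
        rw [h] at this ⊢
        linarith
      · have := hmax (1 - p) (by linarith)
        rw [rel_eq, div_le_iff₀ (by linarith)] at this
        rwa [show p + (1 - p) = 1 by ring] at this
    nlinarith
  refine ⟨?_, hle1⟩
  by_contra hc
  push Not at hc
  have hhalf : p ≤ 1 / 2 := by linarith
  have hj : ∃ j, C.a j ≤ p + m := by
    rcases (mem_endpoints C p).1 hp.1 with h | ⟨i, h⟩ | ⟨i, h⟩
    · linarith
    · exact ⟨i, by linarith⟩
    · exact ⟨i, by linarith [C.hab i]⟩
  have hB := lemmaB δ hδ1 hδ2 C hlast hctr hmin (p + m) hle1 hj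
  have e1 := DD_add C.carrier hmC (p - (1 - p)) (p - m) 1 (by linarith) (by linarith)
  have e2 := DD_add C.carrier hmC (p - m) (p + m) 1 (by linarith) hle1
  have e3 := DD_full C.carrier (p - (1 - p)) (p - m) (by linarith)
    (fun x hx => (mem_carrier C x).2 (Or.inl (hx.2.trans hc)))
  have hrel : 1 - δ ≤ relMeasure C.carrier p (1 - p) := by
    rw [rel_eq, show p + (1 - p) = 1 by ring, le_div_iff₀ (by linarith)]
    nlinarith
  have hom : 1 - p ≤ omegaMax C δ p :=
    le_csSup (omega_bdd δ hδ2 C hlast p hp.1) ⟨by linarith, fun h => by linarith [h.2]⟩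
  have := hvB.2 ⟨hp, hhalf, hom⟩
  linarith

/-- The reflected complementary configuration. -/
def cRefl (C : Config) (hlast : IsGreatest (range C.b) 1) : Config where
  r := C.r
  hr := C.hr
  a := fun i => 1 - C.a ⟨C.r - 1 - i.1, by have := i.2; omega⟩
  b := fun i => if h : i.1 + 1 < C.r then 1 - C.b ⟨C.r - 2 - i.1, by omega⟩ else 1
  ha := fun i => by
    have h1 := hlast.2 ⟨⟨C.r - 1 - i.1, by have := i.2; omega⟩, rfl⟩
    have h2 := C.hab ⟨C.r - 1 - i.1, by have := i.2; omega⟩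
    linarith
  hab := fun i => by
    split_ifs with h
    · have := C.hba ⟨C.r - 2 - i.1, by omega⟩ ⟨C.r - 1 - i.1, by omega⟩
        (by simp only [Fin.mk_lt_mk]; omega)
      linarith
    · have := C.ha ⟨C.r - 1 - i.1, by have := i.2; omega⟩
      linarith
  hba := fun i j hij => by
    have hij' : i.1 < j.1 := hij
    have hj := j.2
    rw [dif_pos (by omega)]
    have h1 := C.hab ⟨C.r - 1 - j.1, by omega⟩
    have h2 : C.b ⟨C.r - 1 - j.1, by omega⟩ ≤ C.b ⟨C.r - 2 - i.1, by omega⟩ :=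
      b_mono C (by simp only [Fin.mk_le_mk]; omega)
    linarith

theorem refl_a (C : Config) (hlast : IsGreatest (range C.b) 1) (j : ℕ) (hj : j < C.r) :
    ∃ h, (cRefl C hlast).a ⟨C.r - 1 - j, h⟩ = 1 - C.a ⟨j, hj⟩ := by
  refine ⟨by change _ < C.r; omega, ?_⟩
  change 1 - C.a ⟨C.r - 1 - (C.r - 1 - j), _⟩ = _
  congr 3; omega

theorem refl_b (C : Config) (hlast : IsGreatest (range C.b) 1) (j : ℕ) (hj : j + 1 < C.r) :
    ∃ h, (cRefl C hlast).b ⟨C.r - 2 - j, h⟩ = 1 - C.b ⟨j, by omega⟩ := by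
  refine ⟨by change _ < C.r; omega, ?_⟩
  change (if h : (C.r - 2 - j) + 1 < C.r then 1 - C.b ⟨C.r - 2 - (C.r - 2 - j), _⟩ else 1) = _
  rw [dif_pos (by omega)]
  congr 3; omega

theorem refl_b_last (C : Config) (hlast : IsGreatest (range C.b) 1) :
    ∃ h, (cRefl C hlast).b ⟨C.r - 1, h⟩ = 1 := by
  have := C.hr
  refine ⟨by change _ < C.r; omega, ?_⟩
  change (if h : (C.r - 1) + 1 < C.r then 1 - C.b ⟨C.r - 2 - (C.r - 1), _⟩ else 1) = _
  rw [dif_neg (by omega)]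

theorem b_last (C : Config) (hlast : IsGreatest (range C.b) 1) :
    C.b ⟨C.r - 1, by have := C.hr; omega⟩ = 1 := by
  obtain ⟨l, hl⟩ := hlast.1
  apply le_antisymm (hlast.2 ⟨_, rfl⟩)
  rw [← hl]
  apply b_mono
  have := l.2
  exact Nat.le_sub_one_of_lt this

theorem refl_hlast (C : Config) (hlast : IsGreatest (range C.b) 1) :
    IsGreatest (range (cRefl C hlast).b) 1 := by
  obtain ⟨h, hb⟩ := refl_b_last C hlast
  refine ⟨⟨_, hb⟩, ?_⟩
  rintro _ ⟨k, rfl⟩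
  rw [← hb]
  apply b_mono
  have : k.1 < C.r := k.2
  exact Nat.le_sub_one_of_lt this

theorem refl_ep1 (C : Config) (hlast : IsGreatest (range C.b) 1) (p : ℝ)
    (hp : p ∈ C.endpoints) : 1 - p ∈ (cRefl C hlast).endpoints := by
  rw [mem_endpoints] at hp ⊢
  rcases hp with h | ⟨i, h⟩ | ⟨i, h⟩
  · obtain ⟨_, hb⟩ := refl_b_last C hlast
    exact Or.inr (Or.inr ⟨_, by rw [hb, h]; ring⟩)
  · obtain ⟨_, ha⟩ := refl_a C hlast i.1 i.2
    exact Or.inr (Or.inl ⟨_, by rw [ha, ← h]⟩)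
  · by_cases hi : i.1 + 1 < C.r
    · obtain ⟨_, hb⟩ := refl_b C hlast i.1 hi
      exact Or.inr (Or.inr ⟨_, by rw [hb, ← h]⟩)
    · left
      have : i = ⟨C.r - 1, by have := C.hr; omega⟩ := by
        ext; have := i.2; simp only; omega
      rw [← h, this, b_last C hlast]; ring

theorem refl_ep2 (C : Config) (hlast : IsGreatest (range C.b) 1) (p : ℝ)
    (hp : p ∈ (cRefl C hlast).endpoints) : 1 - p ∈ C.endpoints := by
  rw [mem_endpoints] at hp ⊢
  rcases hp with h | ⟨i, h⟩ | ⟨i, h⟩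
  · exact Or.inr (Or.inr ⟨_, by rw [b_last C hlast, h]; ring⟩)
  · exact Or.inr (Or.inl ⟨⟨C.r - 1 - i.1, by have := C.hr; omega⟩, by rw [← h]; simp [cRefl]⟩)
  · by_cases hi : i.1 + 1 < C.r
    · exact Or.inr (Or.inr ⟨⟨C.r - 2 - i.1, by omega⟩, by rw [← h]; simp [cRefl, hi]⟩)
    · left
      rw [← h]; simp [cRefl, hi]

theorem refl_mem (C : Config) (hlast : IsGreatest (range C.b) 1) (x : ℝ)
    (hx : 1 - x ∉ C.endpoints) : x ∈ (cRefl C hlast).carrier ↔ 1 - x ∉ C.carrier := by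
  rw [mem_endpoints] at hx
  push Not at hx
  obtain ⟨hx0, hxa, hxb⟩ := hx
  have hr := C.hr
  rw [mem_carrier, mem_carrier]
  constructor
  · rintro (h | ⟨i, h1, h2⟩)
    · rintro (h' | ⟨k, h3, h4⟩)
      · linarith
      · have := hlast.2 ⟨k, rfl⟩
        linarith
    · have hi : i.1 < C.r := i.2
      have h1' : 1 - C.a ⟨C.r - 1 - i.1, by omega⟩ < x := h1
      rintro (h' | ⟨k, h3, h4⟩)
      · have := (refl_hlast C hlast).2 ⟨i, rfl⟩
        linarith
      · have hk : k.1 < C.r - 1 - i.1 := by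
          by_contra hc
          have : C.a ⟨C.r - 1 - i.1, by omega⟩ ≤ C.a k := a_mono C (not_lt.mp hc)
          linarith
        have h2' : x < 1 - C.b ⟨C.r - 2 - i.1, by omega⟩ := by
          have : (cRefl C hlast).b i = 1 - C.b ⟨C.r - 2 - i.1, by omega⟩ := by
            change (if h : i.1 + 1 < C.r then 1 - C.b ⟨C.r - 2 - i.1, _⟩ else 1) = _
            rw [dif_pos (by omega)]
          rwa [this] at h2
        have : C.b k ≤ C.b ⟨C.r - 2 - i.1, by omega⟩ :=
          b_mono C (show k.1 ≤ C.r - 2 - i.1 by omega)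
        linarith
  · intro h
    push Not at h
    obtain ⟨h1, h2⟩ := h
    have h1' : 0 < 1 - x := lt_of_le_of_ne h1 (Ne.symm hx0)
    by_cases hx0' : x < 0
    · exact Or.inl hx0'
    right
    have hx1 : 1 - x < 1 := by
      have := hxb ⟨C.r - 1, by omega⟩
      rw [b_last C hlast] at this
      exact lt_of_le_of_ne (by linarith) (Ne.symm this)
    classical
    have hex : ∃ n, ∃ hn : n < C.r, 1 - x < C.b ⟨n, hn⟩ :=
      ⟨C.r - 1, by omega, by rw [b_last C hlast]; exact hx1⟩
    obtain ⟨hn, hlt⟩ := Nat.find_spec hex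
    have hmin := fun m (hm : m < Nat.find hex) => Nat.find_min hex hm
    set n := Nat.find hex
    have hlta : 1 - x < C.a ⟨n, hn⟩ := by
      by_contra hc
      have := h2 ⟨n, hn⟩ (lt_of_le_of_ne (not_lt.mp hc) (hxa _))
      linarith
    obtain ⟨hh, hra⟩ := refl_a C hlast n hn
    refine ⟨_, by rw [hra]; linarith, ?_⟩
    rcases Nat.eq_zero_or_pos n with h0 | hpos
    · obtain ⟨h', hb⟩ := refl_b_last C hlast
      have : (⟨C.r - 1 - n, hh⟩ : Fin (cRefl C hlast).r) = ⟨C.r - 1, h'⟩ := by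
        ext; simp only; omega
      rw [this, hb]; linarith
    · obtain ⟨h', hb⟩ := refl_b C hlast (n - 1) (by omega)
      have : (⟨C.r - 1 - n, hh⟩ : Fin (cRefl C hlast).r) = ⟨C.r - 2 - (n - 1), h'⟩ := by
        ext; simp only; omega
      rw [this, hb]
      have h3 := hmin (n - 1) (by omega)
      push Not at h3
      have h4 := h3 (by omega)
      have h5 := lt_of_le_of_ne h4 (hxb _)
      linarith

theorem ep_finite (C : Config) : C.endpoints.Finite :=
  ((finite_range _).union (finite_range _)).insert _

theorem refl_rel (C : Config) (hlast : IsGreatest (range C.b) 1) (p ω : ℝ) (hω : 0 < ω) :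
    relMeasure (cRefl C hlast).carrier (1 - p) ω = 1 - relMeasure C.carrier p ω := by
  have hmp := Measure.measurePreserving_sub_left (volume : Measure ℝ) 1
  have hmC := meas_carrier C
  have e1 : volume ((cRefl C hlast).carrier ∩ Ioo (1 - p - ω) (1 - p + ω)) =
      volume (C.carrierᶜ ∩ Ioo (p - ω) (p + ω)) := by
    rw [← hmp.measure_preimage (hmC.compl.inter measurableSet_Ioo).nullMeasurableSet]
    apply measure_congr
    have hnull : ∀ᵐ x : ℝ, 1 - x ∉ C.endpoints := by
      have := hmp.quasiMeasurePreserving.ae (p := fun y => y ∉ C.endpoints) (by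
        rw [ae_iff]; simpa using (ep_finite C).measure_zero volume)
      exact this
    filter_upwards [hnull] with x hx
    apply propext
    change x ∈ (cRefl C hlast).carrier ∩ Ioo (1 - p - ω) (1 - p + ω) ↔
      1 - x ∈ C.carrierᶜ ∩ Ioo (p - ω) (p + ω)
    rw [mem_inter_iff, mem_inter_iff, refl_mem C hlast x hx, mem_compl_iff, mem_Ioo, mem_Ioo]
    constructor
    · rintro ⟨a, b, c⟩; exact ⟨a, by linarith, by linarith⟩
    · rintro ⟨a, b, c⟩; exact ⟨a, by linarith, by linarith⟩
  have e2 : DD C.carrier (p - ω) (p + ω) + DD C.carrierᶜ (p - ω) (p + ω) = 2 * ω := by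
    unfold DD
    rw [← ENNReal.toReal_add (DD_fin _ _ _) (DD_fin _ _ _), inter_comm, inter_comm C.carrierᶜ,
      ← sdiff_eq, measure_inter_add_sdiff _ hmC, Real.volume_Ioo,
      ENNReal.toReal_ofReal (by linarith)]
    ring
  have e3 : DD (cRefl C hlast).carrier (1 - p - ω) (1 - p + ω) =
      DD C.carrierᶜ (p - ω) (p + ω) := by
    unfold DD; rw [e1]
  rw [rel_eq, rel_eq, e3, eq_sub_iff_add_eq, ← add_div, add_comm, e2, div_self (by linarith)]

theorem refl_omega (δ : ℝ) (C : Config) (hlast : IsGreatest (range C.b) 1) (p : ℝ) :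
    omegaMax (cRefl C hlast) δ (1 - p) = omegaMax C δ p := by
  unfold omegaMax
  congr 1
  ext ω
  simp only [mem_ofPred_eq]
  apply and_congr_right
  intro h
  rcases h.eq_or_lt with h | h
  · rw [← h]; simp [relMeasure]
  · rw [refl_rel C hlast p ω h, not_iff_not, mem_Ioo, mem_Ioo]
    constructor <;> rintro ⟨a, b⟩ <;> constructor <;> linarith

theorem refl_ctr (δ : ℝ) (C : Config) (hlast : IsGreatest (range C.b) 1)
    (hctr : IsCounterexample δ C) : IsCounterexample δ (cRefl C hlast) := by
  intro c hc
  obtain ⟨ω, hω, hf⟩ := hctr _ (refl_ep2 C hlast c hc)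
  refine ⟨ω, hω, fun h => hf ?_⟩
  have := refl_rel C hlast (1 - c) ω hω
  rw [show 1 - (1 - c) = c by ring] at this
  rw [this] at h
  exact ⟨by linarith [h.2], by linarith [h.1]⟩

theorem refl_black (δ : ℝ) (hδ2 : δ < 1 / 2) (C : Config) (hlast : IsGreatest (range C.b) 1)
    (hctr : IsCounterexample δ C) (p : ℝ) :
    IsBlack (cRefl C hlast) δ (1 - p) ↔ IsWhite C δ p := by
  unfold IsBlack IsWhite
  constructor
  · rintro ⟨h1, h2⟩
    have h3 := refl_ep2 C hlast _ h1
    rw [show 1 - (1 - p) = p by ring] at h3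
    refine ⟨h3, ?_⟩
    rw [refl_omega, refl_rel C hlast p _ (omega_pos δ hδ2 C hlast hctr p h3)] at h2
    linarith
  · rintro ⟨h1, h2⟩
    refine ⟨refl_ep1 C hlast p h1, ?_⟩
    rw [refl_omega, refl_rel C hlast p _ (omega_pos δ hδ2 C hlast hctr p h1)]
    linarith

/-- With `μ(v)` an extremal radius for each black/white endpoint, every endpoint `p` of `C`
lying strictly between `v_B` and `v_W` satisfies `I_{μ(p)}(p) ⊆ (0,1)`. -/
theorem mu_interval_subset
    (δ : ℝ) (hδ1 : 1 / 4 < δ) (hδ2 : δ < 1 / 2)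
    (C : Config) (hlast : IsGreatest (range C.b) 1)
    (hctr : IsCounterexample δ C)
    (hmin : ∀ C' : Config, C'.r < C.r → ¬ IsCounterexample δ C')
    (vB vW : ℝ)
    (hvB : IsGreatest {v : ℝ | IsBlack C δ v ∧ v ≤ 1 / 2 ∧ 1 - v ≤ omegaMax C δ v} vB)
    (hvW : IsLeast {v : ℝ | IsWhite C δ v ∧ 1 / 2 ≤ v ∧ v ≤ omegaMax C δ v} vW)
    (μ : ℝ → ℝ)
    (hμB : ∀ v : ℝ, IsBlack C δ v → 0 < μ v ∧
      ∀ ω > 0, relMeasure C.carrier v ω ≤ relMeasure C.carrier v (μ v))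
    (hμW : ∀ v : ℝ, IsWhite C δ v → 0 < μ v ∧
      ∀ ω > 0, relMeasure C.carrier v (μ v) ≤ relMeasure C.carrier v ω) :
    ∀ p ∈ C.endpoints, vB < p → p < vW →
      Ioo (p - μ p) (p + μ p) ⊆ Ioo (0 : ℝ) 1 := by
  intro p hp h1 h2
  have key : 0 ≤ p - μ p ∧ p + μ p ≤ 1 := by
    rcases black_or_white δ hδ2 C hlast hctr p hp with hb | hw
    · obtain ⟨hm, hmax⟩ := hμB p hb
      exact black_case δ hδ1 hδ2 C hlast hctr hmin vB hvB p (μ p) hb h1 hm hmax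
    · obtain ⟨hm, hmax⟩ := hμW p hw
      have hb' := (refl_black δ hδ2 C hlast hctr p).2 hw
      have := black_case δ hδ1 hδ2 (cRefl C hlast) (refl_hlast C hlast)
        (refl_ctr δ C hlast hctr) hmin (1 - vW) ?_ (1 - p) (μ p) hb' (by linarith) hm ?_
      · constructor <;> linarith [this.1, this.2]
      · obtain ⟨⟨hw1, hw2, hw3⟩, hw4⟩ := hvW
        refine ⟨⟨(refl_black δ hδ2 C hlast hctr vW).2 hw1, by linarith, ?_⟩, ?_⟩
        · rw [refl_omega]; linarith
        · rintro v ⟨hv1, hv2, hv3⟩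
          obtain ⟨w, rfl⟩ : ∃ w, v = 1 - w := ⟨1 - v, by ring⟩
          rw [refl_omega] at hv3
          have := hw4 ⟨(refl_black δ hδ2 C hlast hctr w).1 hv1, by linarith, by linarith⟩
          linarith
      · intro ω hω
        rw [refl_rel C hlast p ω hω, refl_rel C hlast p _ hm]
        linarith [hmax ω hω]
  intro x hx
  exact ⟨by linarith [hx.1, key.1], by linarith [hx.2, key.2]⟩
end
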